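/- Binary characterization of the digital region: in the binary setup, (k=1, D=0, Δ) ∈ ℛ_digital if and only if there exist u, q ∈ [0,1/2] such that β·(1 − h₂(u)) ≤ 1 − h₂(q) and Δ ≤ h₂(ε) + h₂(u) − h₂(ε⋆u) − [ β·h₂(u) − ( h₂(ζ) + h₂(q) − h₂(ζ⋆q) ) ]₊. -/

import Mathlib

open Finset

namespace SecureSC

/-- Shannon entropy (base 2) of a finitely supported distribution `q`. -/
noncomputable def entropy {γ : Type} [Fintype γ] (q : γ → ℝ) : ℝ :=
  -∑ c, q c * Real.logb 2 (q c)

open Classical in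
/-- Pushforward of a distribution along a map. -/
noncomputable def pushf {γ α : Type} [Fintype γ] (q : γ → ℝ) (f : γ → α) : α → ℝ :=
  fun a => ∑ c, if f c = a then q c else 0

/-- Entropy `H(f)` of the random variable `f` under the joint distribution `q`. -/
noncomputable def Hof {γ α : Type} [Fintype γ] [Fintype α] (q : γ → ℝ) (f : γ → α) : ℝ :=
  entropy (pushf q f)

/-- Conditional entropy `H(f | g)` under the joint distribution `q`. -/
noncomputable def condH {γ α β : Type} [Fintype γ] [Fintype α] [Fintype β]
    (q : γ → ℝ) (f : γ → α) (g : γ → β) : ℝ :=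
  Hof q (fun c => (f c, g c)) - Hof q g

/-- Mutual information `I(f ; g)` under the joint distribution `q`. -/
noncomputable def mutInf {γ α β : Type} [Fintype γ] [Fintype α] [Fintype β]
    (q : γ → ℝ) (f : γ → α) (g : γ → β) : ℝ :=
  Hof q f + Hof q g - Hof q (fun c => (f c, g c))

/-- Conditional mutual information `I(f ; g | h)` under the joint distribution `q`. -/
noncomputable def condMutInf {γ α β δ : Type} [Fintype γ] [Fintype α] [Fintype β] [Fintype δ]
    (q : γ → ℝ) (f : γ → α) (g : γ → β) (h : γ → δ) : ℝ :=
  condH q f h - condH q f (fun c => (g c, h c))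

/-- Expectation of `φ` under the distribution `q`. -/
noncomputable def expVal {γ : Type} [Fintype γ] (q : γ → ℝ) (φ : γ → ℝ) : ℝ :=
  ∑ c, q c * φ c

/-- `q` is a probability mass function. -/
def IsPMF {γ : Type} [Fintype γ] (q : γ → ℝ) : Prop :=
  (∀ c, 0 ≤ q c) ∧ ∑ c, q c = 1

/-- `W` is a transition probability (stochastic kernel). -/
def IsKernel {α β : Type} [Fintype β] (W : α → β → ℝ) : Prop :=
  ∀ a, IsPMF (W a)

variable {A B E X Y Z : Type} [Fintype A] [Fintype B] [Fintype E]
  [Fintype X] [Fintype Y] [Fintype Z]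

/-- Component-wise mean distortion on sequences. -/
noncomputable def seqDist (d : A → A → ℝ) {n : ℕ} (a a' : Fin n → A) : ℝ :=
  (n : ℝ)⁻¹ * ∑ i, d (a i) (a' i)

/-- Joint distribution of `(Aⁿ, Bⁿ, Eⁿ, Xᵐ, Yᵐ, Zᵐ)` induced by the i.i.d. source `pS`,
the stochastic encoder `F` and the memoryless channel `Wch`. -/
noncomputable def codeJoint (pS : A × B × E → ℝ) (Wch : X → Y × Z → ℝ) {n m : ℕ}
    (F : (Fin n → A) → (Fin m → X) → ℝ) :
    (Fin n → A) × (Fin n → B) × (Fin n → E) × (Fin m → X) × (Fin m → Y) × (Fin m → Z) → ℝ :=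
  fun w =>
    (∏ i, pS (w.1 i, w.2.1 i, w.2.2.1 i)) * F w.1 w.2.2.2.1 *
      ∏ j, Wch (w.2.2.2.1 j) (w.2.2.2.2.1 j, w.2.2.2.2.2 j)

/-- A tuple `(k, D, Δ)` is achievable for the secure joint source-channel coding problem. -/
def Achievable (pS : A × B × E → ℝ) (Wch : X → Y × Z → ℝ) (d : A → A → ℝ)
    (k D Δ : ℝ) : Prop :=
  ∀ ε : ℝ, 0 < ε →
    ∃ (n m : ℕ), 0 < n ∧
      ∃ (F : (Fin n → A) → (Fin m → X) → ℝ)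
        (g : (Fin n → B) → (Fin m → Y) → Fin n → A),
        IsKernel F ∧
        (m : ℝ) / n ≤ k + ε ∧
        expVal (codeJoint pS Wch F)
          (fun w => seqDist d w.1 (g w.2.1 w.2.2.2.2.1)) ≤ D + ε ∧
        Δ - ε ≤ (n : ℝ)⁻¹ *
          condH (codeJoint pS Wch F) (fun w => w.1)
            (fun w => (w.2.2.1, w.2.2.2.2.2))

/-- Joint distribution of `(U, V, A, B, E)` with factorization `p(u|v) p(v|a) p(a,b,e)`. -/
noncomputable def sourceJointChain {𝒰 𝒱 : Type} [Fintype 𝒰] [Fintype 𝒱]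
    (pS : A × B × E → ℝ) (pU : 𝒱 → 𝒰 → ℝ) (pV : A → 𝒱 → ℝ) : 𝒰 × 𝒱 × A × B × E → ℝ :=
  fun w => pU w.2.1 w.1 * pV w.2.2.1 w.2.1 * pS (w.2.2.1, w.2.2.2.1, w.2.2.2.2)

/-- Joint distribution of `(Q, T, X, Y, Z)` with factorization `p(q) p(t|q) p(x|t) p(y,z|x)`. -/
noncomputable def chanJointQT {𝒬 𝒯 : Type} [Fintype 𝒬] [Fintype 𝒯]
    (Wch : X → Y × Z → ℝ) (pQ : 𝒬 → ℝ) (pT : 𝒬 → 𝒯 → ℝ) (pXk : 𝒯 → X → ℝ) :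
    𝒬 × 𝒯 × X × Y × Z → ℝ :=
  fun w => pQ w.1 * pT w.1 w.2.1 * pXk w.2.1 w.2.2.1 * Wch w.2.2.1 (w.2.2.2.1, w.2.2.2.2)

/-- The single-letter conditions defining the digital inner bound `ℛ_digital` (Theorem 2),
for given auxiliary finite alphabets `𝒰, 𝒱, 𝒬, 𝒯`. -/
def DigitalCond (𝒰 𝒱 𝒬 𝒯 : Type) [Fintype 𝒰] [Fintype 𝒱] [Fintype 𝒬] [Fintype 𝒯]
    (pS : A × B × E → ℝ) (Wch : X → Y × Z → ℝ) (d : A → A → ℝ)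
    (k D Δ : ℝ) : Prop :=
  ∃ (pU : 𝒱 → 𝒰 → ℝ) (pV : A → 𝒱 → ℝ)
    (pQ : 𝒬 → ℝ) (pT : 𝒬 → 𝒯 → ℝ) (pXk : 𝒯 → X → ℝ) (Ahat : 𝒱 → B → A),
    IsKernel pU ∧ IsKernel pV ∧ IsPMF pQ ∧ IsKernel pT ∧ IsKernel pXk ∧
    -- I(U;A|B) ≤ k · I(Q;Y)
    condMutInf (sourceJointChain pS pU pV)
        (fun w => w.1) (fun w => w.2.2.1) (fun w => w.2.2.2.1)
      ≤ k * mutInf (chanJointQT Wch pQ pT pXk)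
        (fun w => w.1) (fun w => w.2.2.2.1) ∧
    -- I(V;A|B) ≤ k · I(T;Y)
    condMutInf (sourceJointChain pS pU pV)
        (fun w => w.2.1) (fun w => w.2.2.1) (fun w => w.2.2.2.1)
      ≤ k * mutInf (chanJointQT Wch pQ pT pXk)
        (fun w => w.2.1) (fun w => w.2.2.2.1) ∧
    -- D ≥ E[d(A, Â(V,B))]
    expVal (sourceJointChain pS pU pV)
        (fun w => d w.2.2.1 (Ahat w.2.1 w.2.2.2.1)) ≤ D ∧
    -- Δ ≤ H(A|U,E) − [ I(V;A|U,B) − k·(I(T;Y|Q) − I(T;Z|Q)) ]₊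
    Δ ≤ condH (sourceJointChain pS pU pV)
          (fun w => w.2.2.1) (fun w => (w.1, w.2.2.2.2))
        - max 0
          (condMutInf (sourceJointChain pS pU pV)
              (fun w => w.2.1) (fun w => w.2.2.1) (fun w => (w.1, w.2.2.2.1))
           - k * (condMutInf (chanJointQT Wch pQ pT pXk)
                    (fun w => w.2.1) (fun w => w.2.2.2.1) (fun w => w.1)
                  - condMutInf (chanJointQT Wch pQ pT pXk)
                    (fun w => w.2.1) (fun w => w.2.2.2.2) (fun w => w.1)))


/-- The binary entropy function `h₂` (note `Real.logb 2 0 = 0`, so `h₂ 0 = h₂ 1 = 0`). -/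
noncomputable def h2 (x : ℝ) : ℝ := -(x * Real.logb 2 x) - (1 - x) * Real.logb 2 (1 - x)

/-- Binary convolution `a ⋆ b = a(1−b) + (1−a)b`. -/
def bstar (a b : ℝ) : ℝ := a * (1 - b) + (1 - a) * b

/-- Binary source with BEC/BSC side informations: `A` is uniform on `{0,1}`, `B` is the
output of a BEC with erasure probability `β` (`none` is the erasure symbol) and input `A`,
and `E` is the output of a BSC with crossover probability `ε` and input `A`, the two
channels being conditionally independent given `A`. -/
noncomputable def binSource (β ε : ℝ) : Bool × Option Bool × Bool → ℝ :=
  fun w => (1 / 2 : ℝ) *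
    (if w.2.1 = none then β else if w.2.1 = some w.1 then 1 - β else 0) *
    (if w.2.2 = w.1 then 1 - ε else ε)

/-- Type-II wiretap channel: Bob receives `Y = X` noiselessly, Eve receives `Z`, the output
of a BSC with crossover probability `ζ` and input `X`. -/
noncomputable def wiretapII (ζ : ℝ) : Bool → Bool × Bool → ℝ :=
  fun x w => (if w.1 = x then 1 else 0) * (if w.2 = x then 1 - ζ else ζ)

/-- Hamming distortion on `{0,1}`. -/
noncomputable def hamming : Bool → Bool → ℝ := fun a a' => if a = a' then 0 else 1

/-- `η x = -x log₂ x`. -/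
noncomputable def eta (x : ℝ) : ℝ := -(x * Real.logb 2 x)

lemma eta_zero : eta 0 = 0 := by simp [eta]
lemma eta_one : eta 1 = 0 := by simp [eta]

lemma eta_mul (x y : ℝ) : eta (x * y) = x * eta y + y * eta x := by
  unfold eta
  by_cases hx : x = 0
  · simp [hx]
  by_cases hy : y = 0
  · simp [hy]
  rw [Real.logb_mul hx hy]; ring

lemma h2_eq (x : ℝ) : h2 x = eta x + eta (1 - x) := by unfold h2 eta; ring

lemma h2_zero : h2 0 = 0 := by simp [h2]
lemma h2_one : h2 1 = 0 := by simp [h2]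
lemma h2_one_sub (x : ℝ) : h2 (1 - x) = h2 x := by
  rw [h2_eq, h2_eq]; rw [show 1 - (1 - x) = x by ring]; ring

lemma h2_eq_binEntropy (x : ℝ) : h2 x = Real.binEntropy x / Real.log 2 := by
  unfold h2 Real.binEntropy Real.logb
  rw [Real.log_inv, Real.log_inv]; ring

lemma h2_half : h2 (1 / 2) = 1 := by
  rw [h2_eq_binEntropy]
  have := Real.binEntropy_two_inv
  rw [one_div, this]
  exact div_self (Real.log_pos (by norm_num)).ne'

lemma h2_continuous : Continuous h2 := by
  have : h2 = fun x => Real.binEntropy x / Real.log 2 := funext h2_eq_binEntropy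
  rw [this]
  exact Real.binEntropy_continuous.div_const _

lemma h2_le_one (x : ℝ) : h2 x ≤ 1 := by
  rw [h2_eq_binEntropy, div_le_one (Real.log_pos (by norm_num))]
  exact Real.binEntropy_le_log_two

lemma h2_nonneg {x : ℝ} (h0 : 0 ≤ x) (h1 : x ≤ 1) : 0 ≤ h2 x := by
  rw [h2_eq_binEntropy]
  exact div_nonneg (Real.binEntropy_nonneg h0 h1) (Real.log_pos (by norm_num)).le

/-- Grouping property. -/
lemma eta_pair {a b : ℝ} (ha : 0 ≤ a) (hb : 0 ≤ b) :
    eta a + eta b = eta (a + b) + (a + b) * h2 (b / (a + b)) := by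
  by_cases h : a + b = 0
  · have h1 : a = 0 := by linarith
    have h2 : b = 0 := by linarith
    subst h1 h2; simp [eta_zero]
  · have e1 : a = (a + b) * (1 - b / (a + b)) := by field_simp; ring
    have e2 : b = (a + b) * (b / (a + b)) := by field_simp
    have k1 := congrArg eta e1
    have k2 := congrArg eta e2
    rw [k1, k2, eta_mul, eta_mul, h2_eq]; ring

lemma eta_add_le {a b : ℝ} (ha : 0 ≤ a) (hb : 0 ≤ b) : eta (a + b) ≤ eta a + eta b := by
  rw [eta_pair ha hb]
  have : 0 ≤ h2 (b / (a + b)) := h2_nonneg (by positivity) (div_le_one_of_le₀ (by linarith) (by positivity))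
  have := mul_nonneg (add_nonneg ha hb) this
  linarith

lemma bstar_mem {e x : ℝ} (he0 : 0 ≤ e) (he1 : e ≤ 1) (h0 : 0 ≤ x) (h1 : x ≤ 1) :
    0 ≤ bstar e x ∧ bstar e x ≤ 1 := by
  unfold bstar
  constructor
  · have := mul_nonneg he0 (sub_nonneg.2 h1)
    have := mul_nonneg (sub_nonneg.2 he1) h0
    linarith
  · nlinarith [mul_nonneg he0 h0, mul_nonneg (sub_nonneg.2 he1) (sub_nonneg.2 h1)]

lemma eta_bsc {a b e : ℝ} (ha : 0 ≤ a) (hb : 0 ≤ b) (he0 : 0 ≤ e) (he1 : e ≤ 1) :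
    eta (a * (1 - e) + b * e) + eta (a * e + b * (1 - e))
      = eta (a + b) + (a + b) * h2 (bstar e (b / (a + b))) := by
  have he1' := sub_nonneg.2 he1
  rw [eta_pair (by positivity) (by positivity)]
  have hs : a * (1 - e) + b * e + (a * e + b * (1 - e)) = a + b := by ring
  rw [hs]
  by_cases h : a + b = 0
  · rw [h]; simp
  · congr 3
    unfold bstar
    field_simp
    ring

lemma h2_bstar_le {e x : ℝ} (he0 : 0 ≤ e) (he1 : e ≤ 1) (h0 : 0 ≤ x) (h1 : x ≤ 1) :
    h2 (bstar e x) ≤ h2 e + h2 x := by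
  have he1' := sub_nonneg.2 he1
  have h1' := sub_nonneg.2 h1
  have a1 : eta (bstar e x) ≤ eta (e * (1 - x)) + eta ((1 - e) * x) :=
    eta_add_le (by positivity) (by positivity)
  have a2 : eta (1 - bstar e x) ≤ eta (e * x) + eta ((1 - e) * (1 - x)) := by
    have : 1 - bstar e x = e * x + (1 - e) * (1 - x) := by unfold bstar; ring
    rw [this]
    exact eta_add_le (by positivity) (by positivity)
  rw [eta_mul, eta_mul] at a1 a2
  rw [h2_eq, h2_eq, h2_eq]
  nlinarith

/-! ### Mrs. Gerber -/

lemma bstar_sym (e x : ℝ) : bstar e (1 - x) = 1 - bstar e x := by unfold bstar; ring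

lemma bstar_le_half {e x : ℝ} (he1 : e ≤ 1 / 2) (h1 : x ≤ 1 / 2) : bstar e x ≤ 1 / 2 := by
  unfold bstar; nlinarith

lemma h2_mono {x y : ℝ} (h0 : 0 ≤ x) (hxy : x ≤ y) (hy : y ≤ 1 / 2) : h2 x ≤ h2 y := by
  rw [h2_eq_binEntropy, h2_eq_binEntropy]
  have := Real.binEntropy_strictMonoOn.monotoneOn
  have h := this (a := x) (b := y) ⟨h0, by linarith⟩ ⟨by linarith, by linarith⟩ hxy
  exact div_le_div_of_nonneg_right h (Real.log_pos (by norm_num)).le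

/-- `L t = log ((1+t)/(1-t))`. -/
noncomputable def LL (t : ℝ) : ℝ := Real.log (1 + t) - Real.log (1 - t)

lemma LL_deriv {t : ℝ} (h0 : -1 < t) (h1 : t < 1) : HasDerivAt LL (2 / (1 - t ^ 2)) t := by
  unfold LL
  have a : HasDerivAt (fun t : ℝ => Real.log (1 + t)) (1 / (1 + t)) t :=
    ((hasDerivAt_id t).const_add 1).log (by simp; linarith)
  have b : HasDerivAt (fun t : ℝ => Real.log (1 - t)) (-1 / (1 - t)) t :=
    ((hasDerivAt_id t).const_sub 1).log (by simp; linarith)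
  refine (a.sub b).congr_deriv ?_
  have : 1 + t ≠ 0 := by linarith
  have : 1 - t ≠ 0 := by linarith
  have : 1 - t ^ 2 ≠ 0 := by rw [show 1 - t ^ 2 = (1 + t) * (1 - t) by ring]; positivity
  field_simp
  ring

lemma LL_zero : LL 0 = 0 := by simp [LL]

lemma LL_ge {t : ℝ} (h0 : 0 ≤ t) (h1 : t < 1) : 2 * t ≤ LL t := by
  have hd : ∀ s ∈ Set.Ico (0:ℝ) 1, HasDerivAt (fun s => LL s - 2 * s) (2 / (1 - s ^ 2) - 2) s := by
    intro s hs
    have := (LL_deriv (by linarith [hs.1]) hs.2).sub ((hasDerivAt_id s).const_mul 2)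
    exact this.congr_deriv (by ring)
  have hm : MonotoneOn (fun s => LL s - 2 * s) (Set.Ico 0 1) := by
    apply monotoneOn_of_deriv_nonneg (convex_Ico 0 1)
    · intro s hs; exact (hd s hs).continuousAt.continuousWithinAt
    · intro s hs
      rw [interior_Ico] at hs
      exact (hd s ⟨hs.1.le, hs.2⟩).differentiableAt.differentiableWithinAt
    · intro s hs
      rw [interior_Ico] at hs
      rw [(hd s ⟨hs.1.le, hs.2⟩).deriv]
      have : 0 < 1 - s ^ 2 := by nlinarith [hs.1, hs.2]
      have : 2 ≤ 2 / (1 - s ^ 2) := by rw [le_div_iff₀ this]; nlinarith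
      linarith
  have := hm (a := 0) (b := t) ⟨le_rfl, by norm_num⟩ ⟨h0, h1⟩ h0
  simp [LL_zero] at this
  linarith

lemma LL_pos {t : ℝ} (h0 : 0 < t) (h1 : t < 1) : 0 < LL t := by
  have := LL_ge h0.le h1; linarith

/-- `(1-s²) L(s)/s` is decreasing. -/
lemma FF_anti : AntitoneOn (fun s : ℝ => (1 - s ^ 2) * LL s / s) (Set.Ioo 0 1) := by
  have hd : ∀ s ∈ Set.Ioo (0:ℝ) 1, HasDerivAt (fun s : ℝ => (1 - s ^ 2) * LL s / s)
      (((-(2 * s) * LL s + (1 - s ^ 2) * (2 / (1 - s ^ 2))) * s - (1 - s ^ 2) * LL s * 1) / s ^ 2) s := by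
    intro s hs
    have h1 : HasDerivAt (fun s : ℝ => 1 - s ^ 2) (-(2 * s)) s := by
      simpa using (hasDerivAt_pow 2 s).const_sub 1
    exact (h1.mul (LL_deriv (by linarith [hs.1]) hs.2)).div (hasDerivAt_id s) hs.1.ne'
  apply antitoneOn_of_deriv_nonpos (convex_Ioo 0 1)
  · intro s hs; exact (hd s hs).continuousAt.continuousWithinAt
  · intro s hs
    rw [interior_Ioo] at hs
    exact (hd s hs).differentiableAt.differentiableWithinAt
  · intro s hs
    rw [interior_Ioo] at hs
    rw [(hd s hs).deriv]
    have hp : 0 < 1 - s ^ 2 := by nlinarith [hs.1, hs.2]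
    rw [mul_div_cancel₀ _ hp.ne']
    apply div_nonpos_of_nonpos_of_nonneg _ (sq_nonneg s)
    have := LL_ge hs.1.le hs.2
    nlinarith [mul_nonneg (sq_nonneg s) (by linarith [hs.1] : 0 ≤ LL s)]

/-- `L(ct)/L(t)` is decreasing on `(0,1)`. -/
lemma ratio_anti {c : ℝ} (hc0 : 0 < c) (hc1 : c ≤ 1) :
    AntitoneOn (fun t : ℝ => LL (c * t) / LL t) (Set.Ioo 0 1) := by
  have hct : ∀ s ∈ Set.Ioo (0:ℝ) 1, c * s ∈ Set.Ioo (0:ℝ) 1 := fun s hs =>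
    ⟨mul_pos hc0 hs.1, by nlinarith [hs.1, hs.2]⟩
  have hd : ∀ s ∈ Set.Ioo (0:ℝ) 1, HasDerivAt (fun t : ℝ => LL (c * t) / LL t)
      ((2 / (1 - (c * s) ^ 2) * c * LL s - LL (c * s) * (2 / (1 - s ^ 2))) / LL s ^ 2) s := by
    intro s hs
    have h := hct s hs
    have h1 : HasDerivAt (fun t : ℝ => c * t) c s := by
      simpa using (hasDerivAt_id s).const_mul c
    have h2 : HasDerivAt (fun t : ℝ => LL (c * t)) (2 / (1 - (c * s) ^ 2) * c) s :=
      HasDerivAt.comp s (LL_deriv (by linarith [h.1]) h.2) h1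
    exact h2.div (LL_deriv (by linarith [hs.1]) hs.2) (LL_pos hs.1 hs.2).ne'
  apply antitoneOn_of_deriv_nonpos (convex_Ioo 0 1)
  · intro s hs; exact (hd s hs).continuousAt.continuousWithinAt
  · intro s hs
    rw [interior_Ioo] at hs
    exact (hd s hs).differentiableAt.differentiableWithinAt
  · intro s hs
    rw [interior_Ioo] at hs
    rw [(hd s hs).deriv]
    apply div_nonpos_of_nonpos_of_nonneg _ (sq_nonneg _)
    have h := hct s hs
    have hp : 0 < 1 - s ^ 2 := by nlinarith [hs.1, hs.2]
    have hp' : 0 < 1 - (c * s) ^ 2 := by nlinarith [h.1, h.2]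
    have hF := FF_anti (a := c * s) (b := s) h hs (by nlinarith [hs.1])
    simp only at hF
    rw [div_le_div_iff₀ hs.1 h.1] at hF
    have hF' : (1 - s ^ 2) * LL s * c ≤ (1 - (c * s) ^ 2) * LL (c * s) := by
      have := hs.1
      nlinarith
    have : 2 / (1 - (c * s) ^ 2) * c * LL s - LL (c * s) * (2 / (1 - s ^ 2))
      = 2 * ((1 - s ^ 2) * LL s * c - (1 - (c * s) ^ 2) * LL (c * s)) /
        ((1 - (c * s) ^ 2) * (1 - s ^ 2)) := by
      have := hp.ne'
      have := hp'.ne'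
      generalize 1 - (c * s) ^ 2 = X at *
      generalize 1 - s ^ 2 = Y at *
      field_simp
    rw [this]
    apply div_nonpos_of_nonpos_of_nonneg _ (by positivity)
    linarith

/-- entropy in terms of the bias -/
noncomputable def GG (t : ℝ) : ℝ := Real.binEntropy ((1 - t) / 2)

lemma GG_cont : Continuous GG := by
  unfold GG
  exact Real.binEntropy_continuous.comp (by fun_prop)

lemma GG_deriv {t : ℝ} (h0 : -1 < t) (h1 : t < 1) : HasDerivAt GG (-(LL t) / 2) t := by
  unfold GG
  have hi : HasDerivAt (fun t : ℝ => (1 - t) / 2) (-1 / 2) t := by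
    simpa using ((hasDerivAt_id t).const_sub 1).div_const 2
  have := HasDerivAt.comp t (Real.hasDerivAt_binEntropy (p := (1 - t) / 2) (by linarith) (by linarith)) hi
  refine this.congr_deriv ?_
  have e : 1 - (1 - t) / 2 = (1 + t) / 2 := by ring
  rw [e, Real.log_div (by linarith) (by norm_num), Real.log_div (by linarith) (by norm_num)]
  unfold LL; ring

lemma gerber_t {c t0 t : ℝ} (hc0 : 0 < c) (hc1 : c ≤ 1) (h0 : t0 ∈ Set.Ioo (0:ℝ) 1)
    (ht : t ∈ Set.Icc (0:ℝ) 1) :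
    GG (c * t0) - c * (LL (c * t0) / LL t0) * GG t0 ≤
      GG (c * t) - c * (LL (c * t0) / LL t0) * GG t := by
  set l := LL (c * t0) / LL t0 with hl
  have hd : ∀ s ∈ Set.Ioo (0:ℝ) 1, HasDerivAt (fun t => GG (c * t) - c * l * GG t)
      (-(LL (c * s)) / 2 * c - c * l * (-(LL s) / 2)) s := by
    intro s hs
    have h : c * s ∈ Set.Ioo (0:ℝ) 1 := ⟨mul_pos hc0 hs.1, by nlinarith [hs.1, hs.2]⟩
    have h1 : HasDerivAt (fun t : ℝ => c * t) c s := by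
      simpa using (hasDerivAt_id s).const_mul c
    have h2 : HasDerivAt (fun t : ℝ => GG (c * t)) (-(LL (c * s)) / 2 * c) s :=
      HasDerivAt.comp (h₂ := GG) s (GG_deriv (by linarith [h.1]) h.2) h1
    exact h2.sub ((GG_deriv (by linarith [hs.1]) hs.2).const_mul (c * l))
  have hcont : Continuous (fun t => GG (c * t) - c * l * GG t) :=
    (GG_cont.comp (by fun_prop)).sub (GG_cont.const_mul _)
  rcases le_total t t0 with h | h
  · have hm : AntitoneOn (fun t => GG (c * t) - c * l * GG t) (Set.Icc 0 t0) := by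
      apply antitoneOn_of_deriv_nonpos (convex_Icc 0 t0) hcont.continuousOn
      · intro s hs
        rw [interior_Icc] at hs
        exact (hd s ⟨hs.1, hs.2.trans h0.2⟩).differentiableAt.differentiableWithinAt
      · intro s hs
        rw [interior_Icc] at hs
        have hs' : s ∈ Set.Ioo (0:ℝ) 1 := ⟨hs.1, hs.2.trans h0.2⟩
        rw [(hd s hs').deriv]
        have hr := ratio_anti hc0 hc1 (a := s) (b := t0) hs' h0 hs.2.le
        simp only at hr
        rw [← hl, le_div_iff₀ (LL_pos hs'.1 hs'.2)] at hr
        nlinarith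
    exact hm (a := t) (b := t0) ⟨ht.1, h⟩ ⟨h0.1.le, le_rfl⟩ h
  · have hm : MonotoneOn (fun t => GG (c * t) - c * l * GG t) (Set.Icc t0 1) := by
      apply monotoneOn_of_deriv_nonneg (convex_Icc t0 1) hcont.continuousOn
      · intro s hs
        rw [interior_Icc] at hs
        exact (hd s ⟨h0.1.trans hs.1, hs.2⟩).differentiableAt.differentiableWithinAt
      · intro s hs
        rw [interior_Icc] at hs
        have hs' : s ∈ Set.Ioo (0:ℝ) 1 := ⟨h0.1.trans hs.1, hs.2⟩
        rw [(hd s hs').deriv]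
        have hr := ratio_anti hc0 hc1 (a := t0) (b := s) h0 hs' hs.1.le
        simp only at hr
        rw [← hl, div_le_iff₀ (LL_pos hs'.1 hs'.2)] at hr
        nlinarith
    exact hm (a := t0) (b := t) ⟨le_rfl, h0.2.le⟩ ⟨h, ht.2⟩ h

lemma GG_h2 (x : ℝ) : h2 x = GG (1 - 2 * x) / Real.log 2 := by
  rw [h2_eq_binEntropy, GG]; congr 2; ring

/-- Supporting line for Mrs. Gerber's function, half range. -/
lemma gerber_half {e u : ℝ} (he0 : 0 ≤ e) (he1 : e ≤ 1 / 2) (hu0 : 0 ≤ u) (hu1 : u ≤ 1 / 2) :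
    ∃ l : ℝ, ∀ x, 0 ≤ x → x ≤ 1 / 2 →
      h2 (bstar e u) - l * h2 u ≤ h2 (bstar e x) - l * h2 x := by
  have hmon : ∀ x, 0 ≤ x → x ≤ 1 / 2 → h2 e ≤ h2 (bstar e x) := fun x h0 h1 =>
    h2_mono he0 (by unfold bstar; nlinarith) (bstar_le_half he1 h1)
  rcases hu0.eq_or_lt with h | h
  · refine ⟨0, fun x h0 h1 => ?_⟩
    have := hmon x h0 h1
    have e2 : bstar e u = e := by rw [← h]; unfold bstar; ring
    rw [e2]; linarith
  rcases hu1.eq_or_lt with h' | h'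
  · refine ⟨1, fun x h0 h1 => ?_⟩
    have e2 : bstar e u = 1 / 2 := by rw [h']; unfold bstar; ring
    have : h2 x ≤ h2 (bstar e x) :=
      h2_mono h0 (by unfold bstar; nlinarith) (bstar_le_half he1 h1)
    rw [e2, h']; linarith
  rcases he1.eq_or_lt with h3 | h3
  · refine ⟨0, fun x h0 h1 => ?_⟩
    have e2 : ∀ y, bstar e y = 1 / 2 := fun y => by rw [h3]; unfold bstar; ring
    rw [e2, e2]; linarith
  refine ⟨(1 - 2 * e) * (LL ((1 - 2 * e) * (1 - 2 * u)) / LL (1 - 2 * u)), fun x h0 h1 => ?_⟩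
  have := gerber_t (c := 1 - 2 * e) (t0 := 1 - 2 * u) (t := 1 - 2 * x) (by linarith) (by linarith)
    ⟨by linarith, by linarith⟩ ⟨by linarith, by linarith⟩
  have e3 : ∀ y, 1 - 2 * bstar e y = (1 - 2 * e) * (1 - 2 * y) := fun y => by unfold bstar; ring
  rw [GG_h2, GG_h2 u, GG_h2 (bstar e x), GG_h2 x, e3, e3]
  have hl : 0 < Real.log 2 := Real.log_pos (by norm_num)
  have := div_le_div_of_nonneg_right this hl.le
  rw [sub_div, sub_div, mul_div_assoc, mul_div_assoc] at this
  exact this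

lemma gerber {e u : ℝ} (he0 : 0 ≤ e) (he1 : e ≤ 1 / 2) (hu0 : 0 ≤ u) (hu1 : u ≤ 1 / 2) :
    ∃ l : ℝ, ∀ x, 0 ≤ x → x ≤ 1 →
      h2 (bstar e u) - l * h2 u ≤ h2 (bstar e x) - l * h2 x := by
  obtain ⟨l, hl⟩ := gerber_half he0 he1 hu0 hu1
  refine ⟨l, fun x h0 h1 => ?_⟩
  rcases le_total x (1 / 2) with h | h
  · exact hl x h0 h
  · have := hl (1 - x) (by linarith) (by linarith)
    rwa [bstar_sym, h2_one_sub, h2_one_sub] at this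

/-- Mrs. Gerber's lemma. -/
lemma mrs_gerber {W : Type} [Fintype W] {P x : W → ℝ} {e u : ℝ}
    (he0 : 0 ≤ e) (he1 : e ≤ 1 / 2) (hu0 : 0 ≤ u) (hu1 : u ≤ 1 / 2)
    (hP : ∀ w, 0 ≤ P w) (hP1 : ∑ w, P w = 1) (hx0 : ∀ w, 0 ≤ x w) (hx1 : ∀ w, x w ≤ 1)
    (hu : ∑ w, P w * h2 (x w) = h2 u) :
    h2 (bstar e u) ≤ ∑ w, P w * h2 (bstar e (x w)) := by
  obtain ⟨l, hl⟩ := gerber he0 he1 hu0 hu1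
  have h : ∑ w, P w * (h2 (bstar e u) - l * h2 u) ≤
      ∑ w, P w * (h2 (bstar e (x w)) - l * h2 (x w)) :=
    Finset.sum_le_sum fun w _ => mul_le_mul_of_nonneg_left (hl _ (hx0 w) (hx1 w)) (hP w)
  rw [← Finset.sum_mul, hP1] at h
  have e2 : ∑ w, P w * (h2 (bstar e (x w)) - l * h2 (x w)) =
      ∑ w, P w * h2 (bstar e (x w)) - l * ∑ w, P w * h2 (x w) := by
    rw [Finset.mul_sum, ← Finset.sum_sub_distrib]
    exact Finset.sum_congr rfl fun w _ => by ring
  rw [e2, hu] at h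
  linarith

/-! ### Pushforward calculus -/

lemma pushf_comp {γ α δ : Type} [Fintype γ] [Fintype α] (q : γ → ℝ) (f : γ → α) (g : α → δ) :
    pushf (pushf q f) g = pushf q (fun c => g (f c)) := by
  classical
  funext d
  unfold pushf
  have : ∀ a, (if g a = d then ∑ c, (if f c = a then q c else 0) else 0)
      = ∑ c, if f c = a then (if g (f c) = d then q c else 0) else 0 := by
    intro a
    split_ifs with h
    · refine Finset.sum_congr rfl fun c _ => ?_
      by_cases h1 : f c = a
      · simp [h1, h]
      · simp [h1]
    · symm
      refine Finset.sum_eq_zero fun c _ => ?_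
      by_cases h1 : f c = a
      · simp [h1, h]
      · simp [h1]
  rw [Finset.sum_congr rfl fun a _ => this a, Finset.sum_comm]
  refine Finset.sum_congr rfl fun c _ => ?_
  simp

lemma Hof_eq {γ α : Type} [Fintype γ] [Fintype α] (q : γ → ℝ) (f : γ → α) :
    Hof q f = ∑ a, eta (pushf q f a) := by
  unfold Hof entropy eta
  rw [Finset.sum_neg_distrib]

lemma Hof_equiv {γ α δ : Type} [Fintype γ] [Fintype α] [Fintype δ] (q : γ → ℝ) (f : γ → α)
    (g : γ → δ) (e : α ≃ δ) (h : ∀ c, g c = e (f c)) : Hof q g = Hof q f := by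
  classical
  rw [Hof_eq, Hof_eq, ← e.sum_comp]
  refine Finset.sum_congr rfl fun a _ => ?_
  congr 1
  unfold pushf
  refine Finset.sum_congr rfl fun c _ => ?_
  simp [h]

lemma pushf_fst {W D δ : Type} [Fintype W] [Fintype D] (K : W × D → ℝ) (ψ : D → δ) (w : W) (b : δ) :
    pushf K (fun d => (d.1, ψ d.2)) (w, b) = pushf (fun d2 => K (w, d2)) ψ b := by
  classical
  unfold pushf
  rw [Fintype.sum_prod_type, Finset.sum_eq_single w]
  · refine Finset.sum_congr rfl fun d _ => ?_
    simp
  · intro w' _ hw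
    refine Finset.sum_eq_zero fun d _ => ?_
    simp [hw]
  · simp

/-- Reduced joint law of `(f(ω₁,ω₂), a)`. -/
noncomputable def RR {Ω₁ Ω₂ W : Type} [Fintype Ω₁] [Fintype Ω₂] (g : Ω₁ → Ω₂ → Bool → ℝ)
    (f : Ω₁ → Ω₂ → W) : W × Bool → ℝ :=
  fun d => pushf (fun c : Ω₁ × Ω₂ => g c.1 c.2 d.2) (fun c => f c.1 c.2) d.1

lemma push_kernel {Ω₁ Ω₂ W D : Type} [Fintype Ω₁] [Fintype Ω₂] [Fintype W] [Fintype D]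
    (g : Ω₁ → Ω₂ → Bool → ℝ) (k : Bool → D → ℝ) (f : Ω₁ → Ω₂ → W) :
    pushf (fun c : Ω₁ × Ω₂ × Bool × D => g c.1 c.2.1 c.2.2.1 * k c.2.2.1 c.2.2.2)
      (fun c => (f c.1 c.2.1, c.2.2)) = fun d => RR g f (d.1, d.2.1) * k d.2.1 d.2.2 := by
  classical
  funext ⟨w, a, d⟩
  unfold RR pushf
  simp only [Fintype.sum_prod_type, Finset.sum_mul]
  refine Finset.sum_congr rfl fun x _ => Finset.sum_congr rfl fun y _ => ?_
  rw [Finset.sum_eq_single a, Finset.sum_eq_single d]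
  · by_cases h : f x y = w <;> simp [h]
  · intro b _ hb; simp [hb]
  · simp
  · intro b _ hb
    refine Finset.sum_eq_zero fun z _ => ?_
    simp [hb]
  · simp

lemma Hof_push {Ω₁ Ω₂ W D δ : Type} [Fintype Ω₁] [Fintype Ω₂] [Fintype W] [Fintype D] [Fintype δ]
    (g : Ω₁ → Ω₂ → Bool → ℝ) (k : Bool → D → ℝ) (f : Ω₁ → Ω₂ → W) (ψ : Bool × D → δ) :
    Hof (fun c : Ω₁ × Ω₂ × Bool × D => g c.1 c.2.1 c.2.2.1 * k c.2.2.1 c.2.2.2)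
      (fun c => (f c.1 c.2.1, ψ c.2.2)) =
    ∑ w, ∑ b, eta (pushf (fun d : Bool × D => RR g f (w, d.1) * k d.1 d.2) ψ b) := by
  have := pushf_comp (fun c : Ω₁ × Ω₂ × Bool × D => g c.1 c.2.1 c.2.2.1 * k c.2.2.1 c.2.2.2)
      (fun c => (f c.1 c.2.1, c.2.2)) (fun d => (d.1, ψ d.2))
  rw [Hof_eq, ← this, push_kernel, Fintype.sum_prod_type]
  refine Finset.sum_congr rfl fun w _ => Finset.sum_congr rfl fun b _ => ?_
  rw [pushf_fst]

/-- marginal, crossover, entropies of a law on `W × Bool`. -/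
noncomputable def PW {W : Type} (r : W × Bool → ℝ) (w : W) : ℝ := r (w, false) + r (w, true)
noncomputable def XW {W : Type} (r : W × Bool → ℝ) (w : W) : ℝ := r (w, true) / PW r w
noncomputable def HW {W : Type} [Fintype W] (r : W × Bool → ℝ) : ℝ := ∑ w, eta (PW r w)
noncomputable def CC {W : Type} [Fintype W] (r : W × Bool → ℝ) : ℝ := ∑ w, PW r w * h2 (XW r w)
noncomputable def CE {W : Type} [Fintype W] (e : ℝ) (r : W × Bool → ℝ) : ℝ :=
  ∑ w, PW r w * h2 (bstar e (XW r w))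

noncomputable def kS (β ε : ℝ) (a : Bool) (d : Option Bool × Bool) : ℝ :=
  (if d.1 = none then β else if d.1 = some a then 1 - β else 0) * (if d.2 = a then 1 - ε else ε)

section src
variable {Ω₁ Ω₂ W : Type} [Fintype Ω₁] [Fintype Ω₂] [Fintype W]
  (g : Ω₁ → Ω₂ → Bool → ℝ) (f : Ω₁ → Ω₂ → W)

/-- joint law -/
noncomputable def JJ {D : Type} (g : Ω₁ → Ω₂ → Bool → ℝ) (k : Bool → D → ℝ) :
    Ω₁ × Ω₂ × Bool × D → ℝ :=
  fun c => g c.1 c.2.1 c.2.2.1 * k c.2.2.1 c.2.2.2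

lemma RR_nonneg (hg : ∀ x y a, 0 ≤ g x y a) (d : W × Bool) : 0 ≤ RR g f d := by
  unfold RR pushf
  refine Finset.sum_nonneg fun c _ => ?_
  split_ifs
  · exact hg _ _ _
  · exact le_rfl

lemma PW_sum : ∑ w, PW (RR g f) w = ∑ x, ∑ y, (g x y false + g x y true) := by
  classical
  unfold PW RR pushf
  simp only [← Finset.sum_add_distrib, Fintype.sum_prod_type]
  rw [Finset.sum_comm]
  refine Finset.sum_congr rfl fun x _ => ?_
  rw [Finset.sum_comm]
  refine Finset.sum_congr rfl fun y _ => ?_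
  rw [Finset.sum_add_distrib]
  simp

lemma H_wb (β ε : ℝ) (hg : ∀ x y a, 0 ≤ g x y a)
    (h1 : ∑ w, PW (RR g f) w = 1) :
    Hof (JJ g (kS β ε)) (fun c => (f c.1 c.2.1, c.2.2.2.1)) =
      h2 β + HW (RR g f) + (1 - β) * CC (RR g f) := by
  unfold JJ
  rw [Hof_push g (kS β ε) f (fun d => d.2.1)]
  have : ∀ w, ∑ b, eta (pushf (fun d : Bool × Option Bool × Bool =>
      RR g f (w, d.1) * kS β ε d.1 d.2) (fun d => d.2.1) b) =
      PW (RR g f) w * h2 β + eta (PW (RR g f) w) + (1 - β) * (PW (RR g f) w * h2 (XW (RR g f) w)) := by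
    intro w
    have p0 := RR_nonneg g f hg (w, false)
    have p1 := RR_nonneg g f hg (w, true)
    have e1 : pushf (fun d : Bool × Option Bool × Bool =>
      RR g f (w, d.1) * kS β ε d.1 d.2) (fun d => d.2.1) none = PW (RR g f) w * β := by
      simp [pushf, kS, Fintype.sum_prod_type, PW]; ring
    have e2 : ∀ b, pushf (fun d : Bool × Option Bool × Bool =>
      RR g f (w, d.1) * kS β ε d.1 d.2) (fun d => d.2.1) (some b) = RR g f (w, b) * (1 - β) := by
      intro b
      cases b <;> simp [pushf, kS, Fintype.sum_prod_type, Fintype.sum_option] <;> ring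
    rw [Fintype.sum_option, Fintype.sum_bool, e1, e2, e2, eta_mul, eta_mul, eta_mul]
    have := eta_pair p0 p1
    rw [h2_eq β]
    unfold XW PW
    linear_combination (1 - β) * this
  rw [Finset.sum_congr rfl fun w _ => this w]
  rw [Finset.sum_add_distrib, Finset.sum_add_distrib, ← Finset.sum_mul, h1, ← Finset.mul_sum]
  unfold HW CC; ring

lemma H_wab (β ε : ℝ) (hg : ∀ x y a, 0 ≤ g x y a)
    (h1 : ∑ w, PW (RR g f) w = 1) :
    Hof (JJ g (kS β ε)) (fun c => (f c.1 c.2.1, (c.2.2.1, c.2.2.2.1))) =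
      h2 β + HW (RR g f) + CC (RR g f) := by
  unfold JJ
  rw [Hof_push g (kS β ε) f (fun d => (d.1, d.2.1))]
  have : ∀ w, ∑ b, eta (pushf (fun d : Bool × Option Bool × Bool =>
      RR g f (w, d.1) * kS β ε d.1 d.2) (fun d => (d.1, d.2.1)) b) =
      PW (RR g f) w * h2 β + eta (PW (RR g f) w) + (PW (RR g f) w * h2 (XW (RR g f) w)) := by
    intro w
    have p0 := RR_nonneg g f hg (w, false)
    have p1 := RR_nonneg g f hg (w, true)
    have e1 : ∀ a b, pushf (fun d : Bool × Option Bool × Bool =>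
      RR g f (w, d.1) * kS β ε d.1 d.2) (fun d => (d.1, d.2.1)) (a, b) = RR g f (w, a) *
        (if b = none then β else if b = some a then 1 - β else 0) := by
      intro a b
      rcases a with _ | _ <;> rcases b with _ | _ | _ <;>
        simp [pushf, kS, Fintype.sum_prod_type, Fintype.sum_option] <;> ring
    simp only [Fintype.sum_prod_type, Fintype.sum_option, Fintype.sum_bool, e1]
    simp [eta_zero, eta_mul]
    have := eta_pair p0 p1
    rw [h2_eq β]
    unfold XW PW
    linear_combination this
  rw [Finset.sum_congr rfl fun w _ => this w]
  rw [Finset.sum_add_distrib, Finset.sum_add_distrib, ← Finset.sum_mul, h1]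
  unfold HW CC; ring

lemma H_we (β ε : ℝ) (hε0 : 0 ≤ ε) (hε1 : ε ≤ 1) (hg : ∀ x y a, 0 ≤ g x y a) :
    Hof (JJ g (kS β ε)) (fun c => (f c.1 c.2.1, c.2.2.2.2)) =
      HW (RR g f) + CE ε (RR g f) := by
  unfold JJ
  rw [Hof_push g (kS β ε) f (fun d => d.2.2)]
  have : ∀ w, ∑ b, eta (pushf (fun d : Bool × Option Bool × Bool =>
      RR g f (w, d.1) * kS β ε d.1 d.2) (fun d => d.2.2) b) =
      eta (PW (RR g f) w) + (PW (RR g f) w * h2 (bstar ε (XW (RR g f) w))) := by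
    intro w
    have p0 := RR_nonneg g f hg (w, false)
    have p1 := RR_nonneg g f hg (w, true)
    have e1 : pushf (fun d : Bool × Option Bool × Bool =>
      RR g f (w, d.1) * kS β ε d.1 d.2) (fun d => d.2.2) false =
        RR g f (w, false) * (1 - ε) + RR g f (w, true) * ε := by
      simp [pushf, kS, Fintype.sum_prod_type, Fintype.sum_option]; ring
    have e2 : pushf (fun d : Bool × Option Bool × Bool =>
      RR g f (w, d.1) * kS β ε d.1 d.2) (fun d => d.2.2) true =
        RR g f (w, false) * ε + RR g f (w, true) * (1 - ε) := by
      simp [pushf, kS, Fintype.sum_prod_type, Fintype.sum_option]; ring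
    rw [Fintype.sum_bool, e1, e2]
    have := eta_bsc p0 p1 hε0 hε1
    unfold XW PW
    linear_combination this
  rw [Finset.sum_congr rfl fun w _ => this w]
  rw [Finset.sum_add_distrib]
  unfold HW CE; ring

lemma H_wae (β ε : ℝ) (hg : ∀ x y a, 0 ≤ g x y a)
    (h1 : ∑ w, PW (RR g f) w = 1) :
    Hof (JJ g (kS β ε)) (fun c => (f c.1 c.2.1, (c.2.2.1, c.2.2.2.2))) =
      HW (RR g f) + CC (RR g f) + h2 ε := by
  unfold JJ
  rw [Hof_push g (kS β ε) f (fun d => (d.1, d.2.2))]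
  have : ∀ w, ∑ b, eta (pushf (fun d : Bool × Option Bool × Bool =>
      RR g f (w, d.1) * kS β ε d.1 d.2) (fun d => (d.1, d.2.2)) b) =
      PW (RR g f) w * h2 ε + eta (PW (RR g f) w) + (PW (RR g f) w * h2 (XW (RR g f) w)) := by
    intro w
    have p0 := RR_nonneg g f hg (w, false)
    have p1 := RR_nonneg g f hg (w, true)
    have e1 : ∀ a b, pushf (fun d : Bool × Option Bool × Bool =>
      RR g f (w, d.1) * kS β ε d.1 d.2) (fun d => (d.1, d.2.2)) (a, b) = RR g f (w, a) *
        (if b = a then 1 - ε else ε) := by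
      intro a b
      rcases a with _ | _ <;> rcases b with _ | _ <;>
        simp [pushf, kS, Fintype.sum_prod_type, Fintype.sum_option] <;> ring
    simp only [Fintype.sum_prod_type, Fintype.sum_bool, e1]
    simp [eta_mul]
    have := eta_pair p0 p1
    rw [h2_eq ε]
    unfold XW PW
    linear_combination this
  rw [Finset.sum_congr rfl fun w _ => this w]
  rw [Finset.sum_add_distrib, Finset.sum_add_distrib, ← Finset.sum_mul, h1]
  unfold HW CC; ring

/-! channel -/

noncomputable def kC (ζ : ℝ) (x : Bool) (w : Bool × Bool) : ℝ :=
  (if w.1 = x then 1 else 0) * (if w.2 = x then 1 - ζ else ζ)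

lemma H_wy (ζ : ℝ) (hg : ∀ x y a, 0 ≤ g x y a) :
    Hof (JJ g (kC ζ)) (fun c => (f c.1 c.2.1, c.2.2.2.1)) =
      HW (RR g f) + CC (RR g f) := by
  unfold JJ
  rw [Hof_push g (kC ζ) f (fun d => d.2.1)]
  have : ∀ w, ∑ b, eta (pushf (fun d : Bool × Bool × Bool =>
      RR g f (w, d.1) * kC ζ d.1 d.2) (fun d => d.2.1) b) =
      eta (PW (RR g f) w) + (PW (RR g f) w * h2 (XW (RR g f) w)) := by
    intro w
    have p0 := RR_nonneg g f hg (w, false)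
    have p1 := RR_nonneg g f hg (w, true)
    have e1 : ∀ b, pushf (fun d : Bool × Bool × Bool =>
      RR g f (w, d.1) * kC ζ d.1 d.2) (fun d => d.2.1) b = RR g f (w, b) := by
      intro b
      rcases b with _ | _ <;> simp [pushf, kC, Fintype.sum_prod_type] <;> ring
    rw [Fintype.sum_bool, e1, e1]
    have := eta_pair p0 p1
    unfold XW PW
    linear_combination this
  rw [Finset.sum_congr rfl fun w _ => this w]
  rw [Finset.sum_add_distrib]
  unfold HW CC; ring

lemma H_wz (ζ : ℝ) (h0 : 0 ≤ ζ) (h1 : ζ ≤ 1) (hg : ∀ x y a, 0 ≤ g x y a) :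
    Hof (JJ g (kC ζ)) (fun c => (f c.1 c.2.1, c.2.2.2.2)) =
      HW (RR g f) + CE ζ (RR g f) := by
  unfold JJ
  rw [Hof_push g (kC ζ) f (fun d => d.2.2)]
  have : ∀ w, ∑ b, eta (pushf (fun d : Bool × Bool × Bool =>
      RR g f (w, d.1) * kC ζ d.1 d.2) (fun d => d.2.2) b) =
      eta (PW (RR g f) w) + (PW (RR g f) w * h2 (bstar ζ (XW (RR g f) w))) := by
    intro w
    have p0 := RR_nonneg g f hg (w, false)
    have p1 := RR_nonneg g f hg (w, true)
    have e1 : pushf (fun d : Bool × Bool × Bool =>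
      RR g f (w, d.1) * kC ζ d.1 d.2) (fun d => d.2.2) false =
        RR g f (w, false) * (1 - ζ) + RR g f (w, true) * ζ := by
      simp [pushf, kC, Fintype.sum_prod_type]; ring
    have e2 : pushf (fun d : Bool × Bool × Bool =>
      RR g f (w, d.1) * kC ζ d.1 d.2) (fun d => d.2.2) true =
        RR g f (w, false) * ζ + RR g f (w, true) * (1 - ζ) := by
      simp [pushf, kC, Fintype.sum_prod_type]; ring
    rw [Fintype.sum_bool, e1, e2]
    have := eta_bsc p0 p1 h0 h1
    unfold XW PW
    linear_combination this
  rw [Finset.sum_congr rfl fun w _ => this w]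
  rw [Finset.sum_add_distrib]
  unfold HW CE; ring

/-- entropy of `w` alone -/
lemma H_w {D : Type} [Fintype D] (k : Bool → D → ℝ) (hk : ∀ a, ∑ d, k a d = 1) :
    Hof (JJ g k) (fun c => f c.1 c.2.1) = HW (RR g f) := by
  rw [← Hof_equiv _ (fun c => f c.1 c.2.1) (fun c : Ω₁ × Ω₂ × Bool × D => (f c.1 c.2.1, ()))
    (Equiv.prodPUnit W).symm (fun c => rfl)]
  unfold JJ
  rw [Hof_push g k f (fun _ => ())]
  unfold HW
  refine Finset.sum_congr rfl fun w _ => ?_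
  simp [pushf, Fintype.sum_prod_type, ← Finset.mul_sum, hk, PW, add_comm]

end src

lemma kS_sum (β ε : ℝ) (a : Bool) : ∑ d, kS β ε a d = 1 := by
  cases a <;> simp [kS, Fintype.sum_prod_type, Fintype.sum_option] <;> ring
lemma kC_sum (ζ : ℝ) (a : Bool) : ∑ d, kC ζ a d = 1 := by
  cases a <;> simp [kC, Fintype.sum_prod_type]

section formulas
variable {𝒰 𝒱 : Type} [Fintype 𝒰] [Fintype 𝒱]

/-- reduced source law -/
noncomputable def gS (pU : 𝒱 → 𝒰 → ℝ) (pV : Bool → 𝒱 → ℝ) (u : 𝒰) (v : 𝒱) (a : Bool) : ℝ :=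
  pU v u * pV a v * (1 / 2)

lemma source_eq (β ε : ℝ) (pU : 𝒱 → 𝒰 → ℝ) (pV : Bool → 𝒱 → ℝ) :
    sourceJointChain (binSource β ε) pU pV = JJ (gS pU pV) (kS β ε) := by
  funext c
  simp only [sourceJointChain, binSource, JJ, gS, kS]; ring

lemma gS_nonneg {pU : 𝒱 → 𝒰 → ℝ} {pV : Bool → 𝒱 → ℝ} (hU : IsKernel pU) (hV : IsKernel pV)
    (u : 𝒰) (v : 𝒱) (a : Bool) : 0 ≤ gS pU pV u v a :=
  mul_nonneg (mul_nonneg ((hU v).1 u) ((hV a).1 v)) (by norm_num)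

lemma gS_sum {pU : 𝒱 → 𝒰 → ℝ} {pV : Bool → 𝒱 → ℝ} (hU : IsKernel pU) (hV : IsKernel pV)
    (a : Bool) : ∑ u, ∑ v, gS pU pV u v a = 1 / 2 := by
  unfold gS
  rw [Finset.sum_comm]
  simp_rw [← Finset.sum_mul, (hU _).2, one_mul]
  rw [(hV a).2, one_mul]

lemma gS_tot {pU : 𝒱 → 𝒰 → ℝ} {pV : Bool → 𝒱 → ℝ} (hU : IsKernel pU) (hV : IsKernel pV)
    {W : Type} [Fintype W] (f : 𝒰 → 𝒱 → W) : ∑ w, PW (RR (gS pU pV) f) w = 1 := by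
  rw [PW_sum]
  simp_rw [Finset.sum_add_distrib]
  rw [gS_sum hU hV, gS_sum hU hV]; norm_num

lemma RR_unit (g : 𝒰 → 𝒱 → Bool → ℝ) (a : Bool) :
    RR g (fun _ _ => ()) ((), a) = ∑ u, ∑ v, g u v a := by
  simp [RR, pushf, Fintype.sum_prod_type]

lemma HW_unit {r : Unit × Bool → ℝ} (h : ∑ w, PW r w = 1) : HW r = 0 := by
  unfold HW
  simp at h ⊢
  rw [h, eta_one]

lemma CC_half {r : Unit × Bool → ℝ} (h : ∀ a, r ((), a) = 1 / 2) : CC r = 1 := by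
  unfold CC XW PW
  rw [Fintype.sum_unique]
  have h' : ∀ a, r (default, a) = 1 / 2 := h
  rw [h', h', show (1 / 2 + 1 / 2 : ℝ) = 1 by norm_num, div_one, h2_half, one_mul]

lemma CC_unit {pU : 𝒱 → 𝒰 → ℝ} {pV : Bool → 𝒱 → ℝ} (hU : IsKernel pU) (hV : IsKernel pV) :
    CC (RR (gS pU pV) (fun _ _ => ())) = 1 := by
  apply CC_half
  intro a
  rw [RR_unit, gS_sum hU hV]

variable {β ε : ℝ} {pU : 𝒱 → 𝒰 → ℝ} {pV : Bool → 𝒱 → ℝ} (hU : IsKernel pU) (hV : IsKernel pV)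

lemma H_b (hU : IsKernel pU) (hV : IsKernel pV) :
    Hof (JJ (gS pU pV) (kS β ε)) (fun c => c.2.2.2.1) = h2 β + (1 - β) := by
  have := H_wb (gS pU pV) (fun _ _ => ()) β ε (gS_nonneg hU hV) (gS_tot hU hV _)
  rw [HW_unit (gS_tot hU hV _), CC_unit hU hV] at this
  have h := Hof_equiv (JJ (gS pU pV) (kS β ε)) (fun c => c.2.2.2.1) (fun c => ((), c.2.2.2.1))
    (Equiv.punitProd (Option Bool)).symm (fun c => rfl)
  linear_combination this - h

lemma H_ab (hU : IsKernel pU) (hV : IsKernel pV) :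
    Hof (JJ (gS pU pV) (kS β ε)) (fun c => (c.2.2.1, c.2.2.2.1)) = h2 β + 1 := by
  have := H_wab (gS pU pV) (fun _ _ => ()) β ε (gS_nonneg hU hV) (gS_tot hU hV _)
  rw [HW_unit (gS_tot hU hV _), CC_unit hU hV] at this
  have h := Hof_equiv (JJ (gS pU pV) (kS β ε)) (fun c => (c.2.2.1, c.2.2.2.1))
    (fun c => ((), (c.2.2.1, c.2.2.2.1))) (Equiv.punitProd (Bool × Option Bool)).symm (fun c => rfl)
  linear_combination this - h

lemma I_UA_B (hU : IsKernel pU) (hV : IsKernel pV) :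
    condMutInf (sourceJointChain (binSource β ε) pU pV)
        (fun w => w.1) (fun w => w.2.2.1) (fun w => w.2.2.2.1) =
      β * (1 - CC (RR (gS pU pV) (fun u _ => u))) := by
  rw [source_eq]
  unfold condMutInf condH
  rw [H_b hU hV, H_ab hU hV,
    H_wb (gS pU pV) (fun u _ => u) β ε (gS_nonneg hU hV) (gS_tot hU hV _),
    H_wab (gS pU pV) (fun u _ => u) β ε (gS_nonneg hU hV) (gS_tot hU hV _)]
  ring

lemma I_VA_B (hU : IsKernel pU) (hV : IsKernel pV) :
    condMutInf (sourceJointChain (binSource β ε) pU pV)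
        (fun w => w.2.1) (fun w => w.2.2.1) (fun w => w.2.2.2.1) =
      β * (1 - CC (RR (gS pU pV) (fun _ v => v))) := by
  rw [source_eq]
  unfold condMutInf condH
  rw [H_b hU hV, H_ab hU hV,
    H_wb (gS pU pV) (fun _ v => v) β ε (gS_nonneg hU hV) (gS_tot hU hV _),
    H_wab (gS pU pV) (fun _ v => v) β ε (gS_nonneg hU hV) (gS_tot hU hV _)]
  ring

lemma H_A_UE (hε0 : 0 ≤ ε) (hε1 : ε ≤ 1) (hU : IsKernel pU) (hV : IsKernel pV) :
    condH (sourceJointChain (binSource β ε) pU pV)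
          (fun w => w.2.2.1) (fun w => (w.1, w.2.2.2.2)) =
      CC (RR (gS pU pV) (fun u _ => u)) + h2 ε - CE ε (RR (gS pU pV) (fun u _ => u)) := by
  rw [source_eq]
  unfold condH
  rw [H_we (gS pU pV) (fun u _ => u) β ε hε0 hε1 (gS_nonneg hU hV),
    Hof_equiv _ (fun c : 𝒰 × 𝒱 × Bool × Option Bool × Bool => (c.1, (c.2.2.1, c.2.2.2.2)))
      (fun c => (c.2.2.1, (c.1, c.2.2.2.2)))
      (⟨fun x => (x.2.1, (x.1, x.2.2)), fun x => (x.2.1, (x.1, x.2.2)), fun _ => rfl, fun _ => rfl⟩ :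
        𝒰 × Bool × Bool ≃ Bool × 𝒰 × Bool) (fun c => rfl),
    H_wae (gS pU pV) (fun u _ => u) β ε (gS_nonneg hU hV) (gS_tot hU hV _)]
  ring

lemma I_VA_UB (hU : IsKernel pU) (hV : IsKernel pV) :
    condMutInf (sourceJointChain (binSource β ε) pU pV)
        (fun w => w.2.1) (fun w => w.2.2.1) (fun w => (w.1, w.2.2.2.1)) =
      β * (CC (RR (gS pU pV) (fun u _ => u)) - CC (RR (gS pU pV) (fun u v => (u, v)))) := by
  rw [source_eq]
  unfold condMutInf condH
  rw [H_wb (gS pU pV) (fun u _ => u) β ε (gS_nonneg hU hV) (gS_tot hU hV _),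
    Hof_equiv _ (fun c : 𝒰 × 𝒱 × Bool × Option Bool × Bool => (c.1, (c.2.2.1, c.2.2.2.1)))
      (fun c => (c.2.2.1, (c.1, c.2.2.2.1)))
      (⟨fun x => (x.2.1, (x.1, x.2.2)), fun x => (x.2.1, (x.1, x.2.2)), fun _ => rfl, fun _ => rfl⟩ :
        𝒰 × Bool × Option Bool ≃ Bool × 𝒰 × Option Bool) (fun c => rfl),
    H_wab (gS pU pV) (fun u _ => u) β ε (gS_nonneg hU hV) (gS_tot hU hV _),
    Hof_equiv _ (fun c : 𝒰 × 𝒱 × Bool × Option Bool × Bool => ((c.1, c.2.1), c.2.2.2.1))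
      (fun c => (c.2.1, (c.1, c.2.2.2.1)))
      (⟨fun x => (x.1.2, (x.1.1, x.2)), fun x => ((x.2.1, x.1), x.2.2), fun _ => rfl, fun _ => rfl⟩ :
        (𝒰 × 𝒱) × Option Bool ≃ 𝒱 × 𝒰 × Option Bool) (fun c => rfl),
    H_wb (gS pU pV) (fun u v => (u, v)) β ε (gS_nonneg hU hV) (gS_tot hU hV _),
    Hof_equiv _ (fun c : 𝒰 × 𝒱 × Bool × Option Bool × Bool =>
        ((c.1, c.2.1), (c.2.2.1, c.2.2.2.1)))
      (fun c => (c.2.1, (c.2.2.1, (c.1, c.2.2.2.1))))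
      (⟨fun x => (x.1.2, (x.2.1, (x.1.1, x.2.2))), fun x => ((x.2.2.1, x.1), (x.2.1, x.2.2.2)),
        fun _ => rfl, fun _ => rfl⟩ :
        (𝒰 × 𝒱) × Bool × Option Bool ≃ 𝒱 × Bool × 𝒰 × Option Bool) (fun c => rfl),
    H_wab (gS pU pV) (fun u v => (u, v)) β ε (gS_nonneg hU hV) (gS_tot hU hV _)]
  ring

end formulas

section chanformulas
variable {𝒬 𝒯 : Type} [Fintype 𝒬] [Fintype 𝒯]

/-- reduced channel law -/
noncomputable def gC (pQ : 𝒬 → ℝ) (pT : 𝒬 → 𝒯 → ℝ) (pX : 𝒯 → Bool → ℝ) (q : 𝒬) (t : 𝒯)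
    (x : Bool) : ℝ := pQ q * pT q t * pX t x

lemma chan_eq (ζ : ℝ) (pQ : 𝒬 → ℝ) (pT : 𝒬 → 𝒯 → ℝ) (pX : 𝒯 → Bool → ℝ) :
    chanJointQT (wiretapII ζ) pQ pT pX = JJ (gC pQ pT pX) (kC ζ) := by
  funext c
  simp only [chanJointQT, wiretapII, JJ, gC, kC]

variable {ζ : ℝ} {pQ : 𝒬 → ℝ} {pT : 𝒬 → 𝒯 → ℝ} {pX : 𝒯 → Bool → ℝ}

lemma gC_nonneg (hQ : IsPMF pQ) (hT : IsKernel pT) (hX : IsKernel pX)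
    (q : 𝒬) (t : 𝒯) (x : Bool) : 0 ≤ gC pQ pT pX q t x :=
  mul_nonneg (mul_nonneg (hQ.1 q) ((hT q).1 t)) ((hX t).1 x)

lemma gC_tot (hQ : IsPMF pQ) (hT : IsKernel pT) (hX : IsKernel pX)
    {W : Type} [Fintype W] (f : 𝒬 → 𝒯 → W) : ∑ w, PW (RR (gC pQ pT pX) f) w = 1 := by
  rw [PW_sum]
  have : ∀ q t, gC pQ pT pX q t false + gC pQ pT pX q t true = pQ q * pT q t := by
    intro q t
    have := (hX t).2
    rw [Fintype.sum_bool] at this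
    unfold gC
    linear_combination (pQ q * pT q t) * this
  simp_rw [this, ← Finset.mul_sum, (hT _).2, mul_one]
  exact hQ.2

lemma H_y (hQ : IsPMF pQ) (hT : IsKernel pT) (hX : IsKernel pX) :
    Hof (JJ (gC pQ pT pX) (kC ζ)) (fun c => c.2.2.2.1) =
      CC (RR (gC pQ pT pX) (fun _ _ => ())) := by
  have := H_wy (gC pQ pT pX) (fun _ _ => ()) ζ (gC_nonneg hQ hT hX)
  rw [HW_unit (gC_tot hQ hT hX _), zero_add] at this
  have h := Hof_equiv (JJ (gC pQ pT pX) (kC ζ)) (fun c => c.2.2.2.1) (fun c => ((), c.2.2.2.1))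
    (Equiv.punitProd Bool).symm (fun c => rfl)
  linear_combination this - h

lemma I_QY (hQ : IsPMF pQ) (hT : IsKernel pT) (hX : IsKernel pX) :
    mutInf (chanJointQT (wiretapII ζ) pQ pT pX) (fun w => w.1) (fun w => w.2.2.2.1) =
      CC (RR (gC pQ pT pX) (fun _ _ => ())) - CC (RR (gC pQ pT pX) (fun q _ => q)) := by
  rw [chan_eq]
  unfold mutInf
  rw [H_y hQ hT hX, H_w (gC pQ pT pX) (fun q _ => q) (kC ζ) (kC_sum ζ),
    H_wy (gC pQ pT pX) (fun q _ => q) ζ (gC_nonneg hQ hT hX)]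
  ring

lemma I_TY (hQ : IsPMF pQ) (hT : IsKernel pT) (hX : IsKernel pX) :
    mutInf (chanJointQT (wiretapII ζ) pQ pT pX) (fun w => w.2.1) (fun w => w.2.2.2.1) =
      CC (RR (gC pQ pT pX) (fun _ _ => ())) - CC (RR (gC pQ pT pX) (fun _ t => t)) := by
  rw [chan_eq]
  unfold mutInf
  rw [H_y hQ hT hX, H_w (gC pQ pT pX) (fun _ t => t) (kC ζ) (kC_sum ζ),
    H_wy (gC pQ pT pX) (fun _ t => t) ζ (gC_nonneg hQ hT hX)]
  ring

lemma I_diff (h0 : 0 ≤ ζ) (h1 : ζ ≤ 1) (hQ : IsPMF pQ) (hT : IsKernel pT) (hX : IsKernel pX) :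
    condMutInf (chanJointQT (wiretapII ζ) pQ pT pX)
                    (fun w => w.2.1) (fun w => w.2.2.2.1) (fun w => w.1)
                  - condMutInf (chanJointQT (wiretapII ζ) pQ pT pX)
                    (fun w => w.2.1) (fun w => w.2.2.2.2) (fun w => w.1) =
    CC (RR (gC pQ pT pX) (fun q _ => q)) - CE ζ (RR (gC pQ pT pX) (fun q _ => q)) +
    (CE ζ (RR (gC pQ pT pX) (fun q t => (q, t))) - CC (RR (gC pQ pT pX) (fun q t => (q, t)))) := by
  rw [chan_eq]
  unfold condMutInf condH
  have y1 := H_wy (gC pQ pT pX) (fun q _ => q) ζ (gC_nonneg hQ hT hX)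
  have z1 := H_wz (gC pQ pT pX) (fun q _ => q) ζ h0 h1 (gC_nonneg hQ hT hX)
  have y2 := H_wy (gC pQ pT pX) (fun q t => (q, t)) ζ (gC_nonneg hQ hT hX)
  have z2 := H_wz (gC pQ pT pX) (fun q t => (q, t)) ζ h0 h1 (gC_nonneg hQ hT hX)
  have y1' := Hof_equiv (JJ (gC pQ pT pX) (kC ζ)) (fun c => (c.1, c.2.2.2.1))
    (fun c => (c.2.2.2.1, c.1)) (Equiv.prodComm _ _) (fun _ => rfl)
  have z1' := Hof_equiv (JJ (gC pQ pT pX) (kC ζ)) (fun c => (c.1, c.2.2.2.2))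
    (fun c => (c.2.2.2.2, c.1)) (Equiv.prodComm _ _) (fun _ => rfl)
  have y2' := Hof_equiv (JJ (gC pQ pT pX) (kC ζ)) (fun c => ((c.1, c.2.1), c.2.2.2.1))
    (fun c => (c.2.1, (c.2.2.2.1, c.1)))
    (⟨fun x => (x.1.2, (x.2, x.1.1)), fun x => ((x.2.2, x.1), x.2.1), fun _ => rfl, fun _ => rfl⟩ :
      (𝒬 × 𝒯) × Bool ≃ 𝒯 × Bool × 𝒬) (fun _ => rfl)
  have z2' := Hof_equiv (JJ (gC pQ pT pX) (kC ζ)) (fun c => ((c.1, c.2.1), c.2.2.2.2))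
    (fun c => (c.2.1, (c.2.2.2.2, c.1)))
    (⟨fun x => (x.1.2, (x.2, x.1.1)), fun x => ((x.2.2, x.1), x.2.1), fun _ => rfl, fun _ => rfl⟩ :
      (𝒬 × 𝒯) × Bool ≃ 𝒯 × Bool × 𝒬) (fun _ => rfl)
  linear_combination y1' - z1' - y2' + z2' + y1 - z1 - y2 + z2

end chanformulas

/-! ### general bounds -/

section bounds
variable {W : Type} [Fintype W] {r : W × Bool → ℝ} (hr : ∀ d, 0 ≤ r d)

lemma PW_nonneg (hr : ∀ d, 0 ≤ r d) (w : W) : 0 ≤ PW r w := add_nonneg (hr _) (hr _)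

lemma XW_mem (hr : ∀ d, 0 ≤ r d) (w : W) : 0 ≤ XW r w ∧ XW r w ≤ 1 :=
  ⟨div_nonneg (hr _) (PW_nonneg hr w),
    div_le_one_of_le₀ (by unfold PW; linarith [hr (w, false)]) (PW_nonneg hr w)⟩

lemma CC_nonneg (hr : ∀ d, 0 ≤ r d) : 0 ≤ CC r :=
  Finset.sum_nonneg fun w _ =>
    mul_nonneg (PW_nonneg hr w) (h2_nonneg (XW_mem hr w).1 (XW_mem hr w).2)

lemma CC_le_one (hr : ∀ d, 0 ≤ r d) (h1 : ∑ w, PW r w = 1) : CC r ≤ 1 := by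
  rw [← h1]
  exact Finset.sum_le_sum fun w _ => mul_le_of_le_one_right (PW_nonneg hr w) (h2_le_one _)

lemma CE_le (hr : ∀ d, 0 ≤ r d) (h1 : ∑ w, PW r w = 1) {e : ℝ} (he0 : 0 ≤ e) (he1 : e ≤ 1) :
    CE e r - CC r ≤ h2 e := by
  have : CE e r ≤ ∑ w, PW r w * (h2 e + h2 (XW r w)) :=
    Finset.sum_le_sum fun w _ => mul_le_mul_of_nonneg_left
      (h2_bstar_le he0 he1 (XW_mem hr w).1 (XW_mem hr w).2) (PW_nonneg hr w)
  simp_rw [mul_add, Finset.sum_add_distrib, ← Finset.sum_mul] at this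
  rw [h1] at this
  unfold CC
  linarith

lemma exists_inv (hr : ∀ d, 0 ≤ r d) (h1 : ∑ w, PW r w = 1) :
    ∃ u ∈ Set.Icc (0 : ℝ) (1 / 2), h2 u = CC r ∧
      ∀ e, 0 ≤ e → e ≤ 1 / 2 → h2 (bstar e u) ≤ CE e r := by
  have := intermediate_value_Icc (by norm_num : (0:ℝ) ≤ 1 / 2) h2_continuous.continuousOn
  rw [h2_zero, h2_half] at this
  obtain ⟨u, hu, hh⟩ := this ⟨CC_nonneg hr, CC_le_one hr h1⟩
  refine ⟨u, hu, hh, fun e he0 he1 => ?_⟩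
  exact mrs_gerber he0 he1 hu.1 hu.2 (PW_nonneg hr) h1 (fun w => (XW_mem hr w).1)
    (fun w => (XW_mem hr w).2) hh.symm

/-- deterministic bit -/
lemma det_zero (h : ∀ w, r (w, false) = 0 ∨ r (w, true) = 0) : CC r = 0 := by
  refine Finset.sum_eq_zero fun w _ => ?_
  unfold XW PW
  rcases h w with h | h
  · rw [h, zero_add]
    by_cases h' : r (w, true) = 0
    · simp [h']
    · rw [div_self h', h2_one, mul_zero]
  · rw [h]; simp [h2_zero]

lemma det_CE (h : ∀ w, r (w, false) = 0 ∨ r (w, true) = 0) (h1 : ∑ w, PW r w = 1) (e : ℝ) :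
    CE e r = h2 e := by
  have : CE e r = ∑ w, PW r w * h2 e := by
    refine Finset.sum_congr rfl fun w _ => ?_
    unfold XW PW
    rcases h w with h | h
    · rw [h, zero_add]
      by_cases h' : r (w, true) = 0
      · simp [h']
      · rw [div_self h']
        have : bstar e 1 = 1 - e := by unfold bstar; ring
        rw [this, h2_one_sub]
    · rw [h]; simp [bstar]
  rw [this, ← Finset.sum_mul, h1, one_mul]

end bounds

lemma RR_pair {Ω₁ Ω₂ : Type} [Fintype Ω₁] [Fintype Ω₂] (g : Ω₁ → Ω₂ → Bool → ℝ) (x : Ω₁) (y : Ω₂)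
    (a : Bool) : RR g (fun x y => (x, y)) ((x, y), a) = g x y a := by
  classical
  simp [RR, pushf]

/-- symmetric binary pair -/
lemma bsc_CC {r : Bool × Bool → ℝ} {u : ℝ}
    (h : ∀ a b, r (a, b) = (if a = b then 1 - u else u) / 2) :
    CC r = h2 u ∧ ∀ e, CE e r = h2 (bstar e u) := by
  constructor
  · unfold CC XW PW
    rw [Fintype.sum_bool]
    simp only [h]
    simp
    rw [show u / 2 + (1 - u) / 2 = 1 / 2 by ring, show (1 - u) / 2 + u / 2 = 1 / 2 by ring,
      show (1 - u) / 2 / (1 / 2) = 1 - u by ring, show u / 2 / (1 / 2) = u by ring, h2_one_sub]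
    ring
  · intro e
    unfold CE XW PW
    rw [Fintype.sum_bool]
    simp only [h]
    simp
    rw [show u / 2 + (1 - u) / 2 = 1 / 2 by ring, show (1 - u) / 2 + u / 2 = 1 / 2 by ring,
      show (1 - u) / 2 / (1 / 2) = 1 - u by ring, show u / 2 / (1 / 2) = u by ring, bstar_sym,
      h2_one_sub]
    ring

/-- **Proposition 4 (Binary characterization of the digital region).** In the binary
BEC/BSC setup over the type-II wiretap channel, `(k=1, D=0, Δ) ∈ ℛ_digital` if and only if
there exist `u, q ∈ [0,1/2]` such that `β(1 − h₂(u)) ≤ 1 − h₂(q)` and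
`Δ ≤ h₂(ε) + h₂(u) − h₂(ε⋆u) − [ β·h₂(u) − (h₂(ζ) + h₂(q) − h₂(ζ⋆q)) ]₊`. -/
theorem binary_digital_characterization (β ε ζ Δ : ℝ)
    (hβ0 : 0 < β) (hβ1 : β ≤ 1)
    (hε0 : 0 ≤ ε) (hε1 : ε ≤ 1 / 2)
    (hζ0 : 0 ≤ ζ) (hζ1 : ζ ≤ 1 / 2)
    (hΔ : 0 ≤ Δ) :
    (∃ (𝒰 𝒱 𝒬 𝒯 : Type) (i𝒰 : Fintype 𝒰) (i𝒱 : Fintype 𝒱)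
      (i𝒬 : Fintype 𝒬) (i𝒯 : Fintype 𝒯),
      @DigitalCond Bool (Option Bool) Bool Bool Bool Bool _ _ _ _ _ _
        𝒰 𝒱 𝒬 𝒯 i𝒰 i𝒱 i𝒬 i𝒯 (binSource β ε) (wiretapII ζ) hamming 1 0 Δ) ↔
    (∃ u q : ℝ, u ∈ Set.Icc (0 : ℝ) (1 / 2) ∧ q ∈ Set.Icc (0 : ℝ) (1 / 2) ∧
      β * (1 - h2 u) ≤ 1 - h2 q ∧
      Δ ≤ h2 ε + h2 u - h2 (bstar ε u)
        - max 0 (β * h2 u - (h2 ζ + h2 q - h2 (bstar ζ q)))) := by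
  constructor
  · rintro ⟨𝒰, 𝒱, 𝒬, 𝒯, i𝒰, i𝒱, i𝒬, i𝒯, pU, pV, pQ, pT, pX, Ahat, hU, hV, hQ, hT, hX,
      c1, c2, c3, c4⟩
    have det : ∀ u v a, Ahat v none ≠ a → gS pU pV u v a = 0 := by
      intro u v a ha
      unfold expVal at c3
      rw [source_eq] at c3
      have hnn : ∀ c : 𝒰 × 𝒱 × Bool × Option Bool × Bool,
          0 ≤ JJ (gS pU pV) (kS β ε) c * hamming c.2.2.1 (Ahat c.2.1 c.2.2.2.1) := by
        intro c
        refine mul_nonneg (mul_nonneg (gS_nonneg hU hV _ _ _) ?_) ?_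
        · unfold kS
          refine mul_nonneg ?_ ?_ <;> split_ifs <;> linarith
        · unfold hamming; split_ifs <;> norm_num
      have hz := (Finset.sum_eq_zero_iff_of_nonneg (fun c _ => hnn c)).1
        (le_antisymm c3 (Finset.sum_nonneg fun c _ => hnn c))
      have hz1 := hz (u, v, a, none, a) (Finset.mem_univ _)
      simp only [JJ, kS, hamming, if_neg ha.symm] at hz1
      simp only [if_true, mul_one] at hz1
      have : β * (1 - ε) ≠ 0 := by
        have : 0 < 1 - ε := by linarith
        positivity
      exact (mul_eq_zero.1 hz1).resolve_right this
    have hUV : CC (RR (gS pU pV) (fun u v => (u, v))) = 0 := by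
      apply det_zero
      rintro ⟨u, v⟩
      rw [RR_pair, RR_pair]
      by_cases h : Ahat v none = false
      · right; exact det u v true (by simp [h])
      · left; exact det u v false h
    rw [I_UA_B hU hV, I_QY hQ hT hX] at c1
    rw [I_diff hζ0 (by linarith) hQ hT hX, I_VA_UB hU hV, hUV,
      H_A_UE hε0 (by linarith) hU hV] at c4
    obtain ⟨u, hu, hu1, hu2⟩ := exists_inv (RR_nonneg _ (fun u _ => u) (gS_nonneg hU hV))
      (gS_tot hU hV _)
    obtain ⟨q, hq, hq1, hq2⟩ := exists_inv (RR_nonneg _ (fun q _ => q) (gC_nonneg hQ hT hX))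
      (gC_tot hQ hT hX _)
    have k1 := CC_le_one (RR_nonneg _ (fun _ _ => ()) (gC_nonneg hQ hT hX)) (gC_tot hQ hT hX _)
    have k2 := CE_le (RR_nonneg _ (fun q t => (q, t)) (gC_nonneg hQ hT hX)) (gC_tot hQ hT hX _)
      hζ0 (by linarith)
    have k3 := hu2 ε hε0 hε1
    have k4 := hq2 ζ hζ0 hζ1
    refine ⟨u, q, hu, hq, ?_, ?_⟩
    · rw [hu1, hq1]; linarith
    · refine c4.trans ?_
      rw [← hu1, ← hq1]
      refine sub_le_sub (by linarith) (max_le_max le_rfl ?_)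
      linarith
  · rintro ⟨u, q, hu, hq, h1, h2'⟩
    have kb : ∀ p : ℝ, p ∈ Set.Icc (0:ℝ) (1 / 2) →
        IsKernel (fun (a b : Bool) => if a = b then 1 - p else p) := by
      intro p hp a
      refine ⟨fun c => ?_, ?_⟩
      · have h1 := hp.1
        have h2 := hp.2
        dsimp only
        split_ifs <;> linarith
      · cases a <;> simp
    have hU := kb u hu
    have hT := kb q hq
    have hV : IsKernel (fun (a b : Bool) => if a = b then (1:ℝ) else 0) := by
      intro a
      refine ⟨fun c => ?_, ?_⟩
      · dsimp only
        split_ifs <;> norm_num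
      · cases a <;> simp
    have hQ : IsPMF (fun _ : Bool => (1 / 2 : ℝ)) := by
      refine ⟨fun _ => by norm_num, by simp⟩
    refine ⟨Bool, Bool, Bool, Bool, inferInstance, inferInstance, inferInstance, inferInstance,
      _, _, _, _, _, fun v _ => v, hU, hV, hQ, hT, hV, ?_⟩
    have sU := bsc_CC (r := RR (gS (fun (a b : Bool) => if a = b then 1 - u else u)
      (fun (a b : Bool) => if a = b then (1:ℝ) else 0)) (fun u _ => u)) (u := u) (by
        intro a b
        cases a <;> cases b <;> simp [RR, pushf, gS, Fintype.sum_prod_type] <;> ring)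
    have sV : CC (RR (gS (fun (a b : Bool) => if a = b then 1 - u else u)
      (fun (a b : Bool) => if a = b then (1:ℝ) else 0)) (fun _ v => v)) = 0 := by
        apply det_zero
        intro a
        cases a <;> simp [RR, pushf, gS, Fintype.sum_prod_type]
    have sUV : CC (RR (gS (fun (a b : Bool) => if a = b then 1 - u else u)
      (fun (a b : Bool) => if a = b then (1:ℝ) else 0)) (fun u v => (u, v))) = 0 := by
        apply det_zero
        rintro ⟨a, b⟩
        rw [RR_pair, RR_pair]
        cases b <;> simp [gS]
    have cQ := bsc_CC (r := RR (gC (fun _ : Bool => (1 / 2 : ℝ))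
      (fun (a b : Bool) => if a = b then 1 - q else q)
      (fun (a b : Bool) => if a = b then (1:ℝ) else 0)) (fun q _ => q)) (u := q) (by
        intro a b
        cases a <;> cases b <;> simp [RR, pushf, gC, Fintype.sum_prod_type] <;> ring)
    have cT : CC (RR (gC (fun _ : Bool => (1 / 2 : ℝ))
      (fun (a b : Bool) => if a = b then 1 - q else q)
      (fun (a b : Bool) => if a = b then (1:ℝ) else 0)) (fun _ t => t)) = 0 := by
        apply det_zero
        intro a
        cases a <;> simp [RR, pushf, gC, Fintype.sum_prod_type]
    have dQT : ∀ w, RR (gC (fun _ : Bool => (1 / 2 : ℝ))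
        (fun (a b : Bool) => if a = b then 1 - q else q)
        (fun (a b : Bool) => if a = b then (1:ℝ) else 0)) (fun q t => (q, t)) (w, false) = 0 ∨
        RR (gC (fun _ : Bool => (1 / 2 : ℝ))
        (fun (a b : Bool) => if a = b then 1 - q else q)
        (fun (a b : Bool) => if a = b then (1:ℝ) else 0)) (fun q t => (q, t)) (w, true) = 0 := by
      rintro ⟨a, b⟩
      rw [RR_pair, RR_pair]
      cases b <;> simp [gC]
    have cQT := det_zero dQT
    have eQT := det_CE dQT (gC_tot hQ hT hV _) ζ
    have c1 : CC (RR (gC (fun _ : Bool => (1 / 2 : ℝ))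
      (fun (a b : Bool) => if a = b then 1 - q else q)
      (fun (a b : Bool) => if a = b then (1:ℝ) else 0)) (fun _ _ => ())) = 1 := by
        apply CC_half
        intro a
        rw [RR_unit]
        cases a <;> simp [gC] <;> ring
    refine ⟨?_, ?_, ?_, ?_⟩
    · rw [I_UA_B hU hV, I_QY hQ hT hV, sU.1, cQ.1, c1]; linarith
    · rw [I_VA_B hU hV, I_TY hQ hT hV, sV, cT, c1]; linarith
    · unfold expVal
      refine le_of_eq (Finset.sum_eq_zero ?_)
      rintro ⟨a, b, c, d, e⟩ _
      simp only [sourceJointChain, hamming]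
      by_cases h : c = b <;> simp [h]
    · rw [I_diff hζ0 (by linarith) hQ hT hV, I_VA_UB hU hV, sUV,
        H_A_UE hε0 (by linarith) hU hV, sU.1, sU.2, cQ.1, cQ.2, cQT, eQT]
      refine h2'.trans (le_of_eq ?_)
      congr 1
      · ring
      · congr 1; ring

end SecureSC
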